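/- For all integers n, m with 2 < n + 1 < m, the wedge sum S^n ∨ S^m is not homotopy dominated by the product S^n × S^m. -/

import Mathlib

open CategoryTheory

/-- The `k`-dimensional unit sphere, i.e. the unit sphere in `ℝ^(k+1)`. -/
abbrev USphere (k : ℕ) : Type :=
  ↥(Metric.sphere (0 : EuclideanSpace ℝ (Fin (k + 1))) 1)

/-- A canonical basepoint on the `k`-sphere. -/
noncomputable def spherePt (k : ℕ) : USphere k :=
  ⟨EuclideanSpace.single 0 1, by
    simp [mem_sphere_zero_iff_norm, EuclideanSpace.norm_single]⟩

/-- `X` is homotopy dominated by `P`. -/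
def HDominates (P X : Type) [TopologicalSpace P] [TopologicalSpace X] : Prop :=
  ∃ (d : C(P, X)) (u : C(X, P)), (d.comp u).Homotopic (ContinuousMap.id X)

/-- The wedge sum of two pointed spaces: the quotient of the disjoint union
identifying the two basepoints. -/
def Wedge (X Y : Type) [TopologicalSpace X] [TopologicalSpace Y] (x₀ : X) (y₀ : Y) : Type :=
  Quot (fun a b : X ⊕ Y => a = Sum.inl x₀ ∧ b = Sum.inr y₀)

instance (X Y : Type) [TopologicalSpace X] [TopologicalSpace Y] (x₀ : X) (y₀ : Y) :
    TopologicalSpace (Wedge X Y x₀ y₀) :=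
  instTopologicalSpaceQuot

/-!
A domination `d : Sⁿ × Sᵐ → Sⁿ ∨ Sᵐ` with homotopy section `u`, followed by the collapses of the
wedge onto its summands, gives `f₁ : Sⁿ × Sᵐ → Sⁿ` and `f₂ : Sⁿ × Sᵐ → Sᵐ` such that `(f₁, f₂)`
misses every pair of points both different from the basepoints. Yet `(f₁, f₂)` must be
surjective. Indeed, the restriction of `u` to `Sⁿ` and the restriction of `u` to `Sᵐ` have
components `u₁ : Sⁿ → Sⁿ` and `v₂ : Sᵐ → Sᵐ`. As maps `Sⁿ → Sᵐ` are nullhomotopic for `n < m`,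
the components `k₁, k₂` of `(f₁, f₂) ∘ (u₁ × v₂)` are homotopic to the identity on `Sⁿ × {y₀}`
and on `{x₀} × Sᵐ`, respectively, and `(k₁, k₂)` has degree one over every point `(p₁, p₂)`. To
see the latter, deform `k₂` to be the constant `-p₂` on a slice `Sⁿ × {w}`, so that the slice
does not meet the fibre over `p₂`. Collapsing one hemisphere of `Sᵐ` to `w` in `k₂` and the
other one to `-w` in `k₁` then makes `k₁` independent of its second variable on that fibre.

The degree enters only as the statement that a continuous self-map of a Euclidean space which is
the identity outside a compact set is surjective. This is proved by integration: for a `C¹` map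
`f` of compact support and a polynomial weight `p`, the integral of
`p (‖x + t f x‖²) det (1 + t Df x)` over a large ball is a polynomial in `t`, constant for small
`t` by change of variables, hence constant.
-/

open Metric Set Topology Filter

section Brouwer

open MeasureTheory Polynomial

section NormedSpace

variable {E : Type*} [NormedAddCommGroup E] [NormedSpace ℝ E] [FiniteDimensional ℝ E]

theorem det_one_add_pos {M : E →L[ℝ] E} (hM : ‖M‖ < 1) : 0 < (1 + M).det := by
  set D : ℝ → ℝ := fun s => (1 + s • M : E →L[ℝ] E).det
  have hD : Continuous D := ContinuousLinearMap.continuous_det.comp (by fun_prop)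
  have hD0 : D 0 = 1 := by
    simp only [D, zero_smul, add_zero]
    exact LinearMap.det_id
  have hne : ∀ s ∈ Icc (0 : ℝ) 1, D s ≠ 0 := by
    intro s hs
    have hs' : ‖-(s • M)‖ < 1 := by
      rw [norm_neg, norm_smul, Real.norm_of_nonneg hs.1]
      exact (mul_le_of_le_one_left (norm_nonneg M) hs.2).trans_lt hM
    have hu : IsUnit (1 + s • M) := by
      simpa only [sub_neg_eq_add] using isUnit_one_sub_of_norm_lt_one hs'
    exact (LinearMap.isUnit_det _
      (hu.map (ContinuousLinearMap.toLinearMapRingHom (R₁ := ℝ) (M₁ := E)))).ne_zero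
  by_contra! hneg
  obtain ⟨s, hs, hs0⟩ := intermediate_value_Icc' zero_le_one hD.continuousOn
    (show (0 : ℝ) ∈ Icc (D 1) (D 0) from ⟨by simpa [D] using hneg, hD0 ▸ zero_le_one⟩)
  exact hne s hs hs0

theorem integral_comp_add_mul_det_of_lipschitzWith [MeasurableSpace E] [BorelSpace E]
    (μ : Measure E) [μ.IsAddHaarMeasure] {f : E → E} {c : NNReal} (hf : Differentiable ℝ f)
    (hc : LipschitzWith c f) (hc1 : c < 1) {K : Set E} (hK : MeasurableSet K)
    (hfK : ∀ x ∉ K, f x = 0) (φ : E → ℝ) :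
    ∫ x in K, φ (x + f x) * (1 + fderiv ℝ f x).det ∂μ = ∫ x in K, φ x ∂μ := by
  have happrox : ApproximatesLinearOn (fun x => x + f x)
      (ContinuousLinearEquiv.refl ℝ E : E →L[ℝ] E) univ c := by
    rw [ApproximatesLinearOn.approximatesLinearOn_iff_lipschitzOnWith]
    convert hc.lipschitzOnWith
    ext x
    simp
  have hN : Subsingleton E ∨
      c < ‖((ContinuousLinearEquiv.refl ℝ E).symm : E →L[ℝ] E)‖₊⁻¹ := by
    rcases subsingleton_or_nontrivial E with hE | hE
    · exact .inl hE
    · refine .inr ?_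
      simpa using hc1
  have hinj : Function.Injective fun x => x + f x := injOn_univ.1 (happrox.injOn hN)
  have hsurj := happrox.surjective hN
  have himage : (fun x => x + f x) '' K = K := by
    have hfix : ∀ x ∉ K, x + f x = x := fun x hx => by rw [hfK x hx, add_zero]
    apply Subset.antisymm
    · rintro _ ⟨x, hx, rfl⟩
      by_contra hy
      exact hy ((hinj (hfix _ hy)).symm ▸ hx)
    · intro y hy
      obtain ⟨x, rfl⟩ := hsurj y
      by_cases hx : x ∈ K
      · exact mem_image_of_mem _ hx
      · exact absurd (hfix x hx ▸ hy) hx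
  have hderiv : ∀ x ∈ K, HasFDerivWithinAt (fun x => x + f x)
      (1 + fderiv ℝ f x) K x := fun x _ =>
    ((hasFDerivAt_id x).add (hf x).hasFDerivAt).hasFDerivWithinAt
  have hdet : ∀ x, 0 < (1 + fderiv ℝ f x).det := fun x =>
    det_one_add_pos ((norm_fderiv_le_of_lipschitz ℝ hc).trans_lt hc1)
  calc ∫ x in K, φ (x + f x) * (1 + fderiv ℝ f x).det ∂μ
      = ∫ y in (fun x => x + f x) '' K, φ y ∂μ := by
        rw [integral_image_eq_integral_abs_det_fderiv_smul μ hK hderiv hinj.injOn]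
        simp only [abs_of_pos (hdet _), smul_eq_mul, mul_comm]
    _ = ∫ x in K, φ x ∂μ := by rw [himage]

end NormedSpace

section SetIntegral

variable {X : Type*} [TopologicalSpace X] [T2Space X] [MeasurableSpace X] [BorelSpace X]
  (μ : Measure X) [IsFiniteMeasureOnCompacts μ] {K : Set X}

theorem exists_polynomial_eval_eq_setIntegral (hK : IsCompact K) (P : C(X, ℝ)[X]) :
    ∃ q : ℝ[X], ∀ t, q.eval t = ∫ x in K, P.eval (ContinuousMap.const X t) x ∂μ := by
  have hint : ∀ f : C(X, ℝ), IntegrableOn f K μ := fun f =>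
    f.continuous.continuousOn.integrableOn_compact hK
  induction P using Polynomial.induction_on' with
  | add P Q hP hQ =>
    obtain ⟨p, hp⟩ := hP
    obtain ⟨q, hq⟩ := hQ
    refine ⟨p + q, fun t => ?_⟩
    simp only [eval_add, hp, hq, ContinuousMap.add_apply]
    exact (integral_add (hint _) (hint _)).symm
  | monomial k f =>
    refine ⟨monomial k (∫ x in K, f x ∂μ), fun t => ?_⟩
    simp only [eval_monomial, ContinuousMap.mul_apply, ContinuousMap.pow_apply,
      ContinuousMap.const_apply, integral_mul_const]

theorem abs_setIntegral_mul_sub_le (hK : IsCompact K) {u v w : X → ℝ} (hu : Continuous u)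
    (hv : Continuous v) (hw : Continuous w) {ε : ℝ} (huv : ∀ x ∈ K, |u x - v x| ≤ ε) :
    |∫ x in K, u x * w x ∂μ - ∫ x in K, v x * w x ∂μ| ≤ ε * ∫ x in K, |w x| ∂μ := by
  have hint {g : X → ℝ} (hg : Continuous g) : IntegrableOn g K μ :=
    hg.continuousOn.integrableOn_compact hK
  have hsub : ∫ x in K, u x * w x ∂μ - ∫ x in K, v x * w x ∂μ =
      ∫ x in K, (u x - v x) * w x ∂μ := by
    simp only [sub_mul]
    exact (integral_sub (hint (hu.mul hw)) (hint (hv.mul hw))).symm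
  rw [hsub, ← integral_const_mul, ← Real.norm_eq_abs]
  refine norm_integral_le_of_norm_le (hint (hw.abs.const_mul ε)) ?_
  filter_upwards [ae_restrict_mem hK.measurableSet] with x hx
  rw [norm_mul]
  exact mul_le_mul_of_nonneg_right (huv x hx) (norm_nonneg _)

end SetIntegral

theorem exists_polynomial_eval_eq_norm_sq {Y E : Type*} [TopologicalSpace Y]
    [NormedAddCommGroup E] [InnerProductSpace ℝ E] (a v : C(Y, E)) :
    ∃ N : C(Y, ℝ)[X], ∀ t x, N.eval (ContinuousMap.const Y t) x = ‖a x + t • v x‖ ^ 2 := by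
  let c₀ : C(Y, ℝ) := ⟨fun x => ‖a x‖ ^ 2, by fun_prop⟩
  let c₁ : C(Y, ℝ) := ⟨fun x => 2 * inner ℝ (a x) (v x), by fun_prop⟩
  let c₂ : C(Y, ℝ) := ⟨fun x => ‖v x‖ ^ 2, by fun_prop⟩
  refine ⟨C c₀ + C c₁ * X + C c₂ * X ^ 2, fun t x => ?_⟩
  simp only [eval_add, eval_mul, eval_C, eval_X, eval_pow, ContinuousMap.add_apply,
    ContinuousMap.mul_apply, ContinuousMap.coe_mk, c₀, c₁, c₂, ContinuousMap.const_apply,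
    ContinuousMap.pow_apply]
  rw [norm_add_sq_real, norm_smul, inner_smul_right, mul_pow, Real.norm_eq_abs, sq_abs]
  ring

theorem exists_polynomial_eval_eq_det {Y E : Type*} [TopologicalSpace Y]
    [NormedAddCommGroup E] [NormedSpace ℝ E] [FiniteDimensional ℝ E] (M : C(Y, E →L[ℝ] E)) :
    ∃ D : C(Y, ℝ)[X], ∀ t x, D.eval (ContinuousMap.const Y t) x =
      (1 + t • M x : E →L[ℝ] E).det := by
  let b := Module.finBasis ℝ E
  have hentry : ∀ i j, Continuous fun x => LinearMap.toMatrix b b (M x) i j := fun i j =>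
    ((LinearMap.toMatrix b b).toLinearMap ∘ₗ ContinuousLinearMap.coeLM ℝ
      ).continuous_of_finiteDimensional.comp M.continuous |>.matrix_elem i j
  let A : Matrix _ _ C(Y, ℝ) := .of fun i j => ⟨_, hentry i j⟩
  refine ⟨(1 + (X : C(Y, ℝ)[X]) • A.map C).det, fun t x => ?_⟩
  let ev : C(Y, ℝ)[X] →+* ℝ := ((Pi.evalRingHom _ x).comp ContinuousMap.coeFnRingHom).comp
    (evalRingHom (ContinuousMap.const Y t))
  change ev _ = _
  rw [ContinuousLinearMap.det, ← LinearMap.det_toMatrix b, RingHom.map_det]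
  congr 1
  have : ((1 + t • M x : E →L[ℝ] E) : E →ₗ[ℝ] E) = 1 + t • (M x : E →ₗ[ℝ] E) := rfl
  rw [this, map_add (LinearMap.toMatrix b b), map_smul (LinearMap.toMatrix b b),
    LinearMap.toMatrix_one, map_add ev.mapMatrix, map_one ev.mapMatrix]
  ext i j
  simp [ev, A, mul_comm t]

section InnerProductSpace

variable {E : Type*} [NormedAddCommGroup E] [InnerProductSpace ℝ E] [FiniteDimensional ℝ E]

section Measure

variable [MeasurableSpace E] [BorelSpace E] (μ : Measure E) [μ.IsAddHaarMeasure]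

theorem integral_eval_norm_sq_mul_det {f : E → E} {K : Set E} (hf : ContDiff ℝ 1 f)
    (hK : IsCompact K) (hfK : ∀ x ∉ K, f x = 0) (p : ℝ[X]) :
    ∫ x in K, p.eval (‖x + f x‖ ^ 2) * (1 + fderiv ℝ f x).det ∂μ =
      ∫ x in K, p.eval (‖x‖ ^ 2) ∂μ := by
  obtain ⟨L, hL⟩ := hf.lipschitzWith_of_hasCompactSupport
    (HasCompactSupport.intro hK fun x => hfK x) one_ne_zero
  obtain ⟨N, hN⟩ := exists_polynomial_eval_eq_norm_sq (.id E) ⟨f, hf.continuous⟩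
  obtain ⟨D, hD⟩ := exists_polynomial_eval_eq_det ⟨fderiv ℝ f, hf.continuous_fderiv one_ne_zero⟩
  obtain ⟨q, hq⟩ := exists_polynomial_eval_eq_setIntegral μ hK
    ((p.map (algebraMap ℝ C(E, ℝ))).comp N * D)
  have hq_eval (t : ℝ) : q.eval t =
      ∫ x in K, p.eval (‖x + t • f x‖ ^ 2) * (1 + t • fderiv ℝ f x).det ∂μ := by
    simp only [hq, eval_mul, eval_comp, eval_map_algebraMap, ContinuousMap.mul_apply,
      aeval_continuousMap_apply, hN, hD, ContinuousMap.id_apply, ContinuousMap.coe_mk]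
  have hq_small : ∀ t ∈ Ioo (0 : ℝ) (L + 1)⁻¹,
      q.eval t = (C (∫ x in K, p.eval (‖x‖ ^ 2) ∂μ)).eval t := by
    intro t ht
    have htL : ‖t‖₊ * L < 1 := by
      rw [← NNReal.coe_lt_coe, NNReal.coe_mul, coe_nnnorm, Real.norm_of_nonneg ht.1.le]
      calc t * L ≤ t * (L + 1) := by gcongr; exacts [ht.1.le, le_add_of_nonneg_right zero_le_one]
        _ < 1 := (lt_inv_mul_iff₀' (by positivity)).1 (by simpa using ht.2)
    rw [hq_eval, eval_C, ← integral_comp_add_mul_det_of_lipschitzWith μ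
      ((hf.differentiable one_ne_zero).const_smul t) ((lipschitzWith_smul t).comp hL) htL
      hK.measurableSet (fun x hx => by simp [hfK x hx]) (fun x => p.eval (‖x‖ ^ 2))]
    simp [fderiv_const_smul (hf.differentiable one_ne_zero _)]
  have hq_const : q = C (∫ x in K, p.eval (‖x‖ ^ 2) ∂μ) :=
    eq_of_infinite_eval_eq _ _ ((Ioo_infinite (by positivity)).mono hq_small)
  simpa only [one_smul, eval_C] using (hq_eval 1).symm.trans (congrArg (eval 1) hq_const)

theorem integral_comp_norm_sq_mul_det {f : E → E} {K : Set E} (hf : ContDiff ℝ 1 f)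
    (hK : IsCompact K) (hfK : ∀ x ∉ K, f x = 0) {h : ℝ → ℝ} (hh : Continuous h) :
    ∫ x in K, h (‖x + f x‖ ^ 2) * (1 + fderiv ℝ f x).det ∂μ = ∫ x in K, h (‖x‖ ^ 2) ∂μ := by
  have hfc := hf.continuous
  have hdet : Continuous fun x => (1 + fderiv ℝ f x).det :=
    ContinuousLinearMap.continuous_det.comp
      (continuous_const.add (hf.continuous_fderiv one_ne_zero))
  obtain ⟨b, hb⟩ := hK.exists_bound_of_continuousOn
    (f := fun x => max (‖x + f x‖ ^ 2) (‖x‖ ^ 2)) (by fun_prop)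
  set W := ∫ x in K, |(1 + fderiv ℝ f x).det| ∂μ + ∫ _ in K, |(1 : ℝ)| ∂μ with hW
  have hW1 : 0 < W + 1 := by positivity
  refine eq_of_forall_dist_le fun ε hε => ?_
  obtain ⟨p, hp⟩ := exists_polynomial_near_of_continuousOn 0 b h hh.continuousOn
    (ε / (W + 1)) (div_pos hε hW1)
  have hp' {g : E → E} (hg : ∀ x ∈ K, ‖g x‖ ^ 2 ≤ b) (x : E) (hx : x ∈ K) :
      |h (‖g x‖ ^ 2) - p.eval (‖g x‖ ^ 2)| ≤ ε / (W + 1) := by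
    rw [abs_sub_comm]
    exact (hp _ ⟨sq_nonneg _, hg x hx⟩).le
  have hleft := abs_setIntegral_mul_sub_le μ hK
    (u := fun x => h (‖x + f x‖ ^ 2)) (v := fun x => p.eval (‖x + f x‖ ^ 2))
    (by fun_prop) (by fun_prop) hdet
    (hp' fun x hx => (le_max_left _ _).trans ((le_abs_self _).trans (hb x hx)))
  have hright := abs_setIntegral_mul_sub_le μ hK
    (u := fun x => h (‖x‖ ^ 2)) (v := fun x => p.eval (‖x‖ ^ 2))
    (w := fun _ => 1) (by fun_prop) (by fun_prop) continuous_const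
    (hp' fun x hx => (le_max_right _ _).trans ((le_abs_self _).trans (hb x hx)))
  rw [integral_eval_norm_sq_mul_det μ hf hK hfK p] at hleft
  simp only [mul_one] at hright
  calc _ ≤ ε / (W + 1) * W := by
        rw [hW, mul_add]
        rw [abs_sub_comm] at hright
        exact (dist_triangle _ _ _).trans (add_le_add hleft hright)
    _ ≤ ε := by
        rw [div_mul_eq_mul_div, div_le_iff₀ hW1]
        gcongr
        exact le_add_of_nonneg_right zero_le_one

theorem setIntegral_max_sub_norm_sq_pos {δ R : ℝ} (hδ : 0 < δ) (hR : 0 < R) :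
    0 < ∫ x in closedBall (0 : E) R, max 0 (δ - ‖x‖ ^ 2) ∂μ := by
  have hcont : Continuous fun x : E => max 0 (δ - ‖x‖ ^ 2) := by fun_prop
  have hnonneg : 0 ≤ᵐ[μ.restrict (closedBall 0 R)] fun x : E => max 0 (δ - ‖x‖ ^ 2) :=
    .of_forall fun x => le_max_left _ _
  rw [setIntegral_pos_iff_support_of_nonneg_ae hnonneg
    (hcont.continuousOn.integrableOn_compact (isCompact_closedBall 0 R))]
  refine ((hcont.isOpen_support.inter isOpen_ball).measure_pos μ ⟨0, ?_, mem_ball_self hR⟩).trans_le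
    (measure_mono (inter_subset_inter_right _ ball_subset_closedBall))
  simpa using hδ

end Measure

theorem exists_add_eq_zero_of_contDiff {f : E → E} (hf : ContDiff ℝ 1 f)
    (hfs : HasCompactSupport f) : ∃ x, x + f x = 0 := by
  let _ : MeasurableSpace E := borel E
  have _ : BorelSpace E := ⟨rfl⟩
  by_contra! hne
  obtain ⟨R, hR, hfR⟩ := hfs.exists_pos_le_norm
  obtain ⟨x₀, hx₀⟩ : ∃ x₀, ∀ x, ‖x₀ + f x₀‖ ≤ ‖x + f x‖ := by
    have hfc := hf.continuous
    refine (show Continuous fun x => ‖x + f x‖ by fun_prop).exists_forall_le ?_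
    refine (tendsto_norm_cocompact_atTop (E := E)).congr' ?_
    filter_upwards [hfs.isCompact.compl_mem_cocompact] with x hx
    rw [image_eq_zero_of_notMem_tsupport hx, add_zero]
  set δ := ‖x₀ + f x₀‖ ^ 2
  have hδ : 0 < δ := pow_pos (norm_pos_iff.2 (hne x₀)) 2
  have hbump : Continuous fun s => max 0 (δ - s) := by fun_prop
  have hzero : ∫ x in closedBall (0 : E) R, max 0 (δ - ‖x‖ ^ 2) = 0 := by
    rw [← integral_comp_norm_sq_mul_det volume hf (isCompact_closedBall 0 R)
      (fun x hx => hfR x (by simpa using (not_le.1 (mt mem_closedBall_zero_iff.2 hx)).le)) hbump]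
    refine integral_eq_zero_of_ae (.of_forall fun x => ?_)
    have : δ ≤ ‖x + f x‖ ^ 2 := pow_le_pow_left₀ (norm_nonneg _) (hx₀ x) 2
    simp [max_eq_left (sub_nonpos.2 this)]
  exact (setIntegral_max_sub_norm_sq_pos volume hδ hR).ne' hzero

theorem exists_eq_zero_of_eventuallyEq_id {G : E → E} (hG : Continuous G)
    (hGid : G =ᶠ[cocompact E] id) : ∃ x, G x = 0 := by
  by_contra! hne
  have hsupp : HasCompactSupport fun x => G x - x := by
    rw [hasCompactSupport_iff_eventuallyEq, coclosedCompact_eq_cocompact]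
    filter_upwards [hGid] with x hx
    simp [hx]
  have hGsub : Continuous fun x => G x - x := hG.sub continuous_id
  obtain ⟨f, hf, hfG, hfsupp⟩ := hGsub.exists_contDiff_approx 1 hG.norm
    fun x => norm_pos_iff.2 (hne x)
  obtain ⟨x, hx⟩ := exists_add_eq_zero_of_contDiff hf (hsupp.mono hfsupp)
  have hfar := hfG x
  rw [eq_neg_of_add_eq_zero_right hx, dist_comm, dist_eq_norm, sub_neg_eq_add,
    sub_add_cancel] at hfar
  exact hfar.false

end InnerProductSpace

theorem surjective_of_eventuallyEq_id {E : Type*} [NormedAddCommGroup E] [NormedSpace ℝ E]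
    [FiniteDimensional ℝ E] {G : E → E} (hG : Continuous G) (hGid : G =ᶠ[cocompact E] id) :
    Function.Surjective G := by
  intro y
  let τ : E ≃ₜ EuclideanSpace ℝ (Fin (Module.finrank ℝ E)) :=
    (Homeomorph.subRight y).trans toEuclidean.toHomeomorph
  have hτ : τ ∘ G ∘ τ.symm =ᶠ[cocompact _] id := by
    filter_upwards [τ.symm.map_cocompact.le hGid] with x hx
    simp_all
  obtain ⟨x, hx⟩ := exists_eq_zero_of_eventuallyEq_id
    (τ.continuous.comp (hG.comp τ.symm.continuous)) hτ
  exact ⟨τ.symm x, sub_eq_zero.1 ((map_eq_zero_iff _ toEuclidean.injective).1 hx)⟩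

end Brouwer

section Essential

variable {Ω Y : Type*} [TopologicalSpace Ω] [TopologicalSpace Y]

/-- `f` covers `p` in an essential way: `p` is a value of every continuous map that agrees with `f`
outside a compact set. For maps of manifolds, this is the part of "nonzero degree" that is needed
here. -/
def EssentialOver (p : Y) (f : C(Ω, Y)) : Prop :=
  ∀ g : C(Ω, Y), g =ᶠ[cocompact Ω] f → p ∈ range g

theorem EssentialOver.of_isOpenEmbedding {E : Type*} [NormedAddCommGroup E] [NormedSpace ℝ E]
    [FiniteDimensional ℝ E] {j : C(Ω, E)} (hj : IsOpenEmbedding j) (z : Ω) :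
    EssentialOver (j z) j := by
  intro g hg
  obtain ⟨K, hK, hgK⟩ := mem_cocompact.1 hg
  set G : E → E := Function.extend j g id
  have hGj (x : Ω) : G (j x) = g x := hj.injective.extend_apply g id x
  have hGid : EqOn G id (j '' K)ᶜ := by
    intro y hy
    by_cases hyj : ∃ x, j x = y
    · obtain ⟨x, rfl⟩ := hyj
      rw [hGj]
      exact hgK fun hx => hy (mem_image_of_mem j hx)
    · exact Function.extend_apply' _ _ _ hyj
  have hjK : IsCompact (j '' K) := hK.image j.continuous
  have hG : Continuous G := by
    rw [continuous_iff_continuousAt]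
    intro y
    by_cases hy : y ∈ j '' K
    · obtain ⟨x, -, rfl⟩ := hy
      rw [← hj.continuousAt_iff]
      exact g.continuous.continuousAt.congr (.of_forall fun x => (hGj x).symm)
    · exact continuousAt_id.congr
        ((hGid.eventuallyEq_of_mem (hjK.isClosed.isOpen_compl.mem_nhds hy)).symm)
  obtain ⟨y, hy⟩ := surjective_of_eventuallyEq_id hG
    (hGid.eventuallyEq_of_mem hjK.compl_mem_cocompact) (j z)
  by_cases hyj : ∃ x, j x = y
  · obtain ⟨x, rfl⟩ := hyj
    exact ⟨x, (hGj x).symm.trans hy⟩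
  · exact absurd ⟨z, hy.symm.trans (Function.extend_apply' _ _ _ hyj)⟩ hyj

theorem EssentialOver.of_homotopy [T2Space Ω] [LocallyCompactSpace Ω] {p : Y} {f₀ f₁ : C(Ω, Y)}
    (hf : EssentialOver p f₀) (H : f₀.Homotopy f₁) {K : Set Ω} (hK : IsCompact K)
    (hH : ∀ t z, H (t, z) = p → z ∈ K) : EssentialOver p f₁ := by
  classical
  intro g hg
  obtain ⟨K', hK', hgK'⟩ := mem_cocompact.1 hg
  obtain ⟨L, hL, hKL⟩ := exists_compact_superset (hK.union hK')
  obtain ⟨lam, hlam_one, -, hlam_supp, hlam⟩ :=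
    exists_continuous_one_zero_of_isCompact hL isClosed_empty (disjoint_empty L)
  let s : C(Ω, unitInterval) := ⟨fun z => ⟨lam z, hlam z⟩, by fun_prop⟩
  have hs : ∀ z ∈ L, s z = 1 := fun z hz => Subtype.ext (hlam_one hz)
  have hgL : ∀ z ∈ frontier L, g z = H (s z, z) := by
    intro z hz
    have hzK' : z ∉ K' := fun h => hz.2 (hKL (.inr h))
    rw [hs z (hL.isClosed.frontier_subset hz), H.apply_one]
    exact hgK' hzK'
  let g' : C(Ω, Y) := ⟨fun z => if z ∈ L then g z else H (s z, z),
    g.continuous.if hgL (by fun_prop)⟩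
  have hg' : g' =ᶠ[cocompact Ω] f₀ := by
    filter_upwards [hL.compl_mem_cocompact, hlam_supp.isCompact.compl_mem_cocompact] with z hzL hz
    have hsz : s z = 0 := Subtype.ext (image_eq_zero_of_notMem_tsupport (f := lam) hz)
    simp [g', show z ∉ L from hzL, hsz]
  obtain ⟨z, hz⟩ := hf g' hg'
  by_cases hzL : z ∈ L
  · exact ⟨z, by simpa [g', hzL] using hz⟩
  · have : H (s z, z) = p := by simpa [g', hzL] using hz
    exact absurd (interior_subset (hKL (.inl (hH _ _ this)))) hzL

end Essential

/-- The unit sphere of a normed space, as a type. -/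
abbrev UnitSphere (V : Type*) [NormedAddCommGroup V] : Type _ :=
  ↥(sphere (0 : V) 1)

section Normalize

variable {X V : Type*} [TopologicalSpace X] [NormedAddCommGroup V]

/-- A sphere-valued map, seen as a map to the ambient space. -/
def toAmbient (f : C(X, UnitSphere V)) : C(X, V) :=
  ContinuousMap.comp ⟨Subtype.val, continuous_subtype_val⟩ f

variable [NormedSpace ℝ V]

/-- The radial projection `x ↦ F x / ‖F x‖` of a nowhere vanishing map. -/
noncomputable def normalizeMap (F : C(X, V)) (hF : ∀ x, F x ≠ 0) : C(X, UnitSphere V) where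
  toFun x := ⟨NormedSpace.normalize (F x),
    mem_sphere_zero_iff_norm.2 (NormedSpace.norm_normalize (hF x))⟩
  continuous_toFun := by
    have hnorm : ∀ x, ‖F x‖ ≠ 0 := fun x => norm_ne_zero_iff.2 (hF x)
    unfold NormedSpace.normalize
    fun_prop (disch := exact hnorm _)

theorem normalizeMap_apply_of_eq {F : C(X, V)} (hF : ∀ x, F x ≠ 0) {x : X} {v : UnitSphere V}
    (h : F x = v) : normalizeMap F hF x = v :=
  Subtype.ext <| (congrArg NormedSpace.normalize h).trans
    (NormedSpace.normalize_eq_self_of_norm_eq_one (norm_eq_of_mem_sphere v))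

theorem normalizeMap_homotopic {F G : C(X, V)} (hF : ∀ x, F x ≠ 0) (hG : ∀ x, G x ≠ 0)
    (hFG : ∀ x, 0 ∉ segment ℝ (F x) (G x)) :
    (normalizeMap F hF).Homotopic (normalizeMap G hG) := by
  let H := ContinuousMap.Homotopy.affine F G
  have hH : ∀ z, H.toContinuousMap z ≠ 0 := fun z h =>
    hFG z.2 (h ▸ lineMap_mem_segment ℝ (F z.2) (G z.2) z.1.2)
  exact ⟨{ toContinuousMap := normalizeMap H.toContinuousMap hH
           map_zero_left := fun x => Subtype.ext <|
             congrArg NormedSpace.normalize (H.apply_zero x)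
           map_one_left := fun x => Subtype.ext <|
             congrArg NormedSpace.normalize (H.apply_one x) }⟩

theorem normalizeMap_toAmbient (f : C(X, UnitSphere V)) :
    normalizeMap (toAmbient f) (fun x => ne_zero_of_mem_unit_sphere (f x)) = f :=
  ContinuousMap.ext fun _ => normalizeMap_apply_of_eq _ rfl

theorem zero_notMem_segment_of_dist_lt_norm {x y : V} (h : dist x y < ‖y‖) :
    0 ∉ segment ℝ y x := by
  intro h0
  have : (0 : V) ∈ ball y ‖y‖ := (convex_ball y ‖y‖).segment_subset
    (mem_ball_self (dist_nonneg.trans_lt h)) h h0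
  simp at this

end Normalize

section Nullhomotopy

variable {A B : Type*} [NormedAddCommGroup A] [InnerProductSpace ℝ A] [FiniteDimensional ℝ A]
  [NormedAddCommGroup B] [NormedSpace ℝ B] [FiniteDimensional ℝ B]

theorem dense_compl_image_cone (hAB : Module.finrank ℝ A < Module.finrank ℝ B) {h : A → B}
    (hh : ContDiff ℝ 1 h) :
    Dense ((fun z : A => ‖z‖ • h (‖z‖⁻¹ • z)) '' {0}ᶜ)ᶜ := by
  refine dense_compl_of_dimH_lt_finrank (lt_of_le_of_lt ?_ (Nat.cast_lt.2 hAB))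
  rw [← Real.dimH_univ_eq_finrank]
  refine (dimH_image_le_of_locally_lipschitzOn fun z hz => ?_).trans (dimH_mono (subset_univ _))
  have hz' : ContDiffAt ℝ 1 (fun z : A => ‖z‖) z := contDiffAt_norm ℝ hz
  obtain ⟨C, t, ht, hC⟩ := (hz'.smul (hh.contDiffAt.comp z
    ((hz'.inv (norm_ne_zero_iff.2 hz)).smul contDiffAt_id))).exists_lipschitzOnWith
  exact ⟨C, t, mem_nhdsWithin_of_mem_nhds ht, hC⟩

theorem exists_unit_forall_smul_ne (hAB : Module.finrank ℝ A < Module.finrank ℝ B) {h : A → B}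
    (hh : ContDiff ℝ 1 h) :
    ∃ p : UnitSphere B, ∀ x : UnitSphere A, ∀ r > (0 : ℝ), r • h x ≠ p := by
  have : Nontrivial B := Module.nontrivial_of_finrank_pos (Nat.zero_lt_of_lt hAB)
  obtain ⟨p, hp, hp_cone⟩ := (dense_compl_image_cone hAB hh).inter_open_nonempty {0}ᶜ
    isOpen_compl_singleton (exists_ne 0)
  refine ⟨⟨NormedSpace.normalize p, mem_sphere_zero_iff_norm.2 (NormedSpace.norm_normalize hp)⟩,
    fun x r hr hrp => hp_cone ⟨(‖p‖ * r) • (x : A), ?_, ?_⟩⟩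
  all_goals have hpr : 0 < ‖p‖ * r := mul_pos (norm_pos_iff.2 hp) hr
  · exact smul_ne_zero hpr.ne' (ne_zero_of_mem_unit_sphere x)
  · have hnorm : ‖(‖p‖ * r) • (x : A)‖ = ‖p‖ * r := by
      rw [norm_smul, norm_eq_of_mem_sphere, mul_one, Real.norm_of_nonneg hpr.le]
    simp only [hnorm, inv_smul_smul₀ hpr.ne']
    rw [mul_smul, hrp, NormedSpace.norm_smul_normalize]

theorem nullhomotopic_of_finrank_lt (hAB : Module.finrank ℝ A < Module.finrank ℝ B)
    (g : C(UnitSphere A, UnitSphere B)) : g.Nullhomotopic := by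
  obtain ⟨G, hG⟩ := (toAmbient g).exists_restrict_eq isClosed_sphere
  replace hG (x : UnitSphere A) : G x = g x := DFunLike.congr_fun hG x
  obtain ⟨h, hh, hhG, -⟩ := G.continuous.exists_contDiff_approx 1
    (continuous_const (y := (1 : ℝ))) fun _ => one_pos
  obtain ⟨p, hp⟩ := exists_unit_forall_smul_ne hAB hh
  let hS : C(UnitSphere A, B) := ⟨fun x => h x, hh.continuous.comp continuous_subtype_val⟩
  have hgS : ∀ x, 0 ∉ segment ℝ (toAmbient g x) (hS x) := fun x => by
    refine zero_notMem_segment_of_dist_lt_norm ?_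
    rw [show ‖toAmbient g x‖ = 1 from norm_eq_of_mem_sphere (g x)]
    exact (congrArg (dist (h x)) (hG x)).symm.trans_lt (hhG x)
  have hS0 : ∀ x, hS x ≠ 0 := fun x hx => hgS x (hx ▸ right_mem_segment ..)
  have hSp : ∀ x, 0 ∉ segment ℝ (hS x) (toAmbient (.const _ (-p)) x) := by
    rintro x ⟨a, b, ha, hb, hab, h0⟩
    replace h0 : a • h x = b • (p : B) := by
      simpa [toAmbient, add_neg_eq_zero, hS] using h0
    rcases hb.eq_or_lt with rfl | hb
    · exact hS0 x (show h x = 0 by simpa [show a = 1 by simpa using hab] using h0)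
    rcases ha.eq_or_lt with rfl | ha
    · exact ne_zero_of_mem_unit_sphere p (by simpa [hb.ne'] using h0.symm)
    · exact hp x (b⁻¹ * a) (by positivity) (by rw [mul_smul, h0, inv_smul_smul₀ hb.ne'])
  refine ⟨-p, ?_⟩
  rw [← normalizeMap_toAmbient g, ← normalizeMap_toAmbient (.const _ (-p))]
  exact (normalizeMap_homotopic _ hS0 hgS).trans (normalizeMap_homotopic hS0 _ hSp)

end Nullhomotopy

theorem homotopic_const_of_one_lt_finrank {X V : Type*} [TopologicalSpace X]
    [NormedAddCommGroup V] [NormedSpace ℝ V] (hV : 1 < Module.finrank ℝ V) (p q : UnitSphere V) :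
    (ContinuousMap.const X p).Homotopic (.const X q) := by
  have : PathConnectedSpace (UnitSphere V) := isPathConnected_iff_pathConnectedSpace.1
    (isPathConnected_sphere (Module.lt_rank_of_lt_finrank hV) 0 zero_le_one)
  rcases isEmpty_or_nonempty X with hX | hX
  · exact Subsingleton.elim (ContinuousMap.const X p) (.const X q) ▸ .refl _
  · exact ContinuousMap.homotopic_const_iff.2 (PathConnectedSpace.joined p q)

section Collapse

variable {V : Type*} [NormedAddCommGroup V] [InnerProductSpace ℝ V]

theorem zero_notMem_segment_of_ne_neg {y w : UnitSphere V} (h : y ≠ -w) :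
    0 ∉ segment ℝ (y : V) w := by
  rintro ⟨a, b, ha, hb, hab, h0⟩
  have hnorm : a = b := by
    simpa [norm_smul, abs_of_nonneg, ha, hb] using congrArg norm (add_eq_zero_iff_eq_neg.1 h0)
  subst hnorm
  rw [← smul_add, smul_eq_zero_iff_right (by grind)] at h0
  exact h (Subtype.ext (eq_neg_of_add_eq_zero_left h0))

theorem exists_homotopic_id_eqOn_hemisphere (w : UnitSphere V) :
    ∃ c : C(UnitSphere V, UnitSphere V), (ContinuousMap.id _).Homotopic c ∧
      ∀ y : UnitSphere V, 0 ≤ inner ℝ (y : V) w → c y = w := by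
  let F : C(UnitSphere V, V) :=
    ⟨fun y => AffineMap.lineMap (y : V) (w : V) (1 + min 0 (inner ℝ (y : V) w)), by
      dsimp only [AffineMap.lineMap_apply]; fun_prop⟩
  have hF (y : UnitSphere V) : 0 ∉ segment ℝ (y : V) (F y) := by
    by_cases hy : y = -w
    · have hFy : F y = y := by
        simp [F, hy, norm_eq_of_mem_sphere]
      rw [hFy, segment_same, mem_singleton_iff]
      exact (ne_zero_of_mem_unit_sphere y).symm
    · have hinner : -1 ≤ inner ℝ (y : V) w := by
        simpa [norm_eq_of_mem_sphere] using neg_le_of_abs_le (abs_real_inner_le_norm (y : V) w)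
      have hFy : F y ∈ segment ℝ (y : V) w := lineMap_mem_segment ℝ _ _
        ⟨by linarith [le_min (show (-1 : ℝ) ≤ 0 by norm_num) hinner],
          add_le_of_nonpos_right (min_le_left ..)⟩
      exact fun h => zero_notMem_segment_of_ne_neg hy
        ((convex_segment (y : V) (w : V)).segment_subset (left_mem_segment ..) hFy h)
  have hF0 (y : UnitSphere V) : F y ≠ 0 := fun h => hF y <| by
    simpa only [h] using right_mem_segment ℝ (y : V) (F y)
  refine ⟨normalizeMap F hF0, ?_, fun y hy => normalizeMap_apply_of_eq hF0 (by simp [F, hy])⟩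
  rw [← normalizeMap_toAmbient (.id _)]
  exact normalizeMap_homotopic _ hF0 hF

theorem exists_homotopic_id_eq_or_eq_neg (w : UnitSphere V) :
    ∃ c c' : C(UnitSphere V, UnitSphere V), (ContinuousMap.id _).Homotopic c ∧
      (ContinuousMap.id _).Homotopic c' ∧ ∀ y, c y = w ∨ c' y = -w := by
  obtain ⟨c, hc, hcw⟩ := exists_homotopic_id_eqOn_hemisphere w
  obtain ⟨c', hc', hcw'⟩ := exists_homotopic_id_eqOn_hemisphere (-w)
  refine ⟨c, c', hc, hc', fun y => (le_total 0 (inner ℝ (y : V) w)).imp (hcw y) fun hy => ?_⟩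
  exact hcw' y (by simpa using hy)

theorem exists_homotopic_extending_slice {X Z : Type*} [TopologicalSpace X] [TopologicalSpace Z]
    (F : C(X × UnitSphere V, Z)) (w : UnitSphere V) {g : C(X, Z)}
    (hg : (F.comp (.prodMk (.id X) (.const X w))).Homotopic g) :
    ∃ F' : C(X × UnitSphere V, Z), F.Homotopic F' ∧ ∀ x, F' (x, w) = g x := by
  obtain ⟨H⟩ := hg
  obtain ⟨c, hc, hcw⟩ := exists_homotopic_id_eqOn_hemisphere w
  let height (z : X × UnitSphere V) : ℝ := inner ℝ (z.2 : V) w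
  have hheight : Continuous height := by fun_prop
  let K (p : unitInterval × X × UnitSphere V) : Z :=
    if 0 ≤ height p.2 then H (projIcc 0 1 zero_le_one (p.1 * height p.2), p.2.1)
    else F (p.2.1, c p.2.2)
  have hK : Continuous K := by
    refine Continuous.if_le (by fun_prop) (by fun_prop) continuous_const (by fun_prop)
      fun p hp => ?_
    rw [← hp, mul_zero, projIcc_left, hcw _ hp.le]
    exact H.apply_zero _
  have hK0 (z : X × UnitSphere V) : K (0, z) = F (z.1, c z.2) := by
    simp only [K]
    split_ifs with hz
    · rw [hcw _ hz, Icc.coe_zero, zero_mul, projIcc_left]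
      exact H.apply_zero _
    · rfl
  have hFc : F.Homotopic (F.comp (.prodMap (.id X) c)) :=
    (ContinuousMap.Homotopic.refl F).comp (.prodMap (.refl (.id X)) hc)
  refine ⟨⟨fun z => K (1, z), by fun_prop⟩, hFc.trans
    ⟨⟨⟨K, hK⟩, hK0, fun _ => rfl⟩⟩, fun x => ?_⟩
  have hw : height (x, w) = 1 := by simp [height, norm_eq_of_mem_sphere]
  simp only [ContinuousMap.coe_mk, K, hw, zero_le_one, if_true, Icc.coe_one, one_mul,
    projIcc_right]
  exact H.apply_one x

end Collapse

section Radial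

variable {A B Z : Type*} [TopologicalSpace Z]
  [NormedAddCommGroup A] [NormedSpace ℝ A] [NormedAddCommGroup B] [NormedSpace ℝ B]

/-- The extension `(z, r) ↦ exp r • a z` of `a` to `Z × ℝ`, the real line being a radial coordinate
of `A \ {0}` in which the unit sphere is `r = 0`. -/
noncomputable def radialMap (a : C(Z, A)) : C(Z × ℝ, A) :=
  ⟨fun z => Real.exp z.2 • a z.1, by fun_prop⟩

theorem isOpenEmbedding_radialMap_toAmbient_id :
    IsOpenEmbedding (radialMap (toAmbient (.id (UnitSphere A)))) :=
  isOpen_compl_singleton.isOpenEmbedding_subtypeVal.comp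
    (((Homeomorph.refl _).prodCongr Real.expOrderIso.toHomeomorph).trans
      (homeomorphUnitSphereProd A).symm).isOpenEmbedding

theorem exp_smul_eq_iff {r : ℝ} {x y : UnitSphere A} :
    Real.exp r • (x : A) = y ↔ r = 0 ∧ x = y := by
  refine ⟨fun h => ?_, fun ⟨hr, hxy⟩ => by simp [hr, hxy]⟩
  have hr : r = 0 := by simpa [norm_smul, norm_eq_of_mem_sphere] using congrArg norm h
  exact ⟨hr, Subtype.ext (by simpa [hr] using h)⟩

/-- The map `Z × ℝ × ℝ → A × B` obtained from `a` and `b` by letting each component be rescaled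
independently. For `Z = S(A) × S(B)` the source is an open piece of `A × B`, so it makes the degree
theory of `A × B` available for maps to `S(A) × S(B)`. -/
noncomputable def biradialMap (a : C(Z, A)) (b : C(Z, B)) : C(Z × ℝ × ℝ, A × B) :=
  ⟨fun z => (Real.exp z.2.1 • a z.1, Real.exp z.2.2 • b z.1), by fun_prop⟩

/-- `(a, b) : Z → S(A) × S(B)` hits `(p₁, p₂)` essentially; the test is made after thickening source
and target by two radial directions. -/
def EssentialPair (p₁ : UnitSphere A) (p₂ : UnitSphere B) (a : C(Z, UnitSphere A))
    (b : C(Z, UnitSphere B)) : Prop :=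
  EssentialOver ((p₁ : A), (p₂ : B)) (biradialMap (toAmbient a) (toAmbient b))

theorem EssentialPair.exists_eq {p₁ : UnitSphere A} {p₂ : UnitSphere B} {a : C(Z, UnitSphere A)}
    {b : C(Z, UnitSphere B)} (h : EssentialPair p₁ p₂ a b) : ∃ z, a z = p₁ ∧ b z = p₂ := by
  obtain ⟨z, hz⟩ := h _ .rfl
  exact ⟨z.1, (exp_smul_eq_iff.1 (congrArg Prod.fst hz)).2,
    (exp_smul_eq_iff.1 (congrArg Prod.snd hz)).2⟩

theorem essentialPair_fst_snd [FiniteDimensional ℝ A] [FiniteDimensional ℝ B]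
    (p₁ : UnitSphere A) (p₂ : UnitSphere B) :
    EssentialPair p₁ p₂ (ContinuousMap.fst (α := UnitSphere A) (β := UnitSphere B))
      ContinuousMap.snd := by
  have hj : IsOpenEmbedding (biradialMap
      (toAmbient (ContinuousMap.fst (α := UnitSphere A) (β := UnitSphere B)))
      (toAmbient ContinuousMap.snd)) :=
    ((isOpenEmbedding_radialMap_toAmbient_id (A := A)).prodMap
      (isOpenEmbedding_radialMap_toAmbient_id (A := B))).comp
      (Homeomorph.prodProdProdComm _ _ _ _).isOpenEmbedding
  simpa [EssentialPair, biradialMap, toAmbient] using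
    EssentialOver.of_isOpenEmbedding hj ((p₁, p₂), 0, 0)

variable [T2Space Z] [CompactSpace Z] {p₁ : UnitSphere A} {p₂ : UnitSphere B}
  {a a' : C(Z, UnitSphere A)} {b b' : C(Z, UnitSphere B)}

theorem EssentialPair.of_homotopy (h : EssentialPair p₁ p₂ a b)
    (F : (toAmbient a).Homotopy (toAmbient a')) (G : (toAmbient b).Homotopy (toAmbient b'))
    (hFG : ∀ t z r s, Real.exp r • F (t, z) = p₁ → Real.exp s • G (t, z) = p₂ → r = 0 ∧ s = 0) :
    EssentialPair p₁ p₂ a' b' := by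
  refine EssentialOver.of_homotopy h (K := univ ×ˢ {0} ×ˢ {0})
    ⟨⟨fun z => (Real.exp z.2.2.1 • F (z.1, z.2.1), Real.exp z.2.2.2 • G (z.1, z.2.1)),
      by fun_prop⟩, fun z => ?_, fun z => ?_⟩
    (isCompact_univ.prod (isCompact_singleton.prod isCompact_singleton)) ?_
  · simp [biradialMap]
  · simp [biradialMap]
  · rintro t ⟨z, r, s⟩ hz
    simpa using hFG t z r s (congrArg Prod.fst hz) (congrArg Prod.snd hz)

theorem EssentialPair.of_homotopic (h : EssentialPair p₁ p₂ a b) (ha : a.Homotopic a')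
    (hb : b.Homotopic b') : EssentialPair p₁ p₂ a' b' := by
  obtain ⟨F⟩ := ha
  obtain ⟨G⟩ := hb
  exact h.of_homotopy (.comp (.refl ⟨Subtype.val, continuous_subtype_val⟩) F)
    (.comp (.refl ⟨Subtype.val, continuous_subtype_val⟩) G)
    fun t z r s hr hs => ⟨(exp_smul_eq_iff.1 hr).1, (exp_smul_eq_iff.1 hs).1⟩

theorem EssentialPair.congr_fst (h : EssentialPair p₁ p₂ a b)
    (haa' : ∀ z, b z = p₂ → a z = a' z) : EssentialPair p₁ p₂ a' b := by
  refine h.of_homotopy (.affine _ _) (.refl _) fun t z r s hr hs => ?_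
  obtain ⟨hs, hb⟩ := exp_smul_eq_iff.1 hs
  have ha : toAmbient a' z = toAmbient a z := congrArg Subtype.val (haa' z hb).symm
  rw [ContinuousMap.Homotopy.affine_apply, ha, AffineMap.lineMap_same_apply] at hr
  exact ⟨(exp_smul_eq_iff.1 hr).1, hs⟩

theorem EssentialPair.congr_snd (h : EssentialPair p₁ p₂ a b)
    (hbb' : ∀ z, a z = p₁ → b z = b' z) : EssentialPair p₁ p₂ a b' := by
  refine h.of_homotopy (.refl _) (.affine _ _) fun t z r s hr hs => ?_
  obtain ⟨hr, ha⟩ := exp_smul_eq_iff.1 hr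
  have hb : toAmbient b' z = toAmbient b z := congrArg Subtype.val (hbb' z ha).symm
  rw [ContinuousMap.Homotopy.affine_apply, hb, AffineMap.lineMap_same_apply] at hs
  exact ⟨hr, (exp_smul_eq_iff.1 hs).1⟩

end Radial

section SphereProduct

theorem comp_prodMk_id_homotopic_of_slice_const {X Z V : Type*} [TopologicalSpace X]
    [TopologicalSpace Z] [NormedAddCommGroup V] [InnerProductSpace ℝ V]
    {F : C(X × UnitSphere V, Z)} {w : UnitSphere V} (hF : ∀ x x', F (x, w) = F (x', w))
    (φ : C(UnitSphere V, X)) :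
    (F.comp (φ.prodMk (.id _))).Homotopic (F.comp (.prodMk (.const _ (φ (-w))) (.id _))) := by
  obtain ⟨c, c', hc, hc', hcc'⟩ := exists_homotopic_id_eq_or_eq_neg w
  have heq : F.comp ((φ.comp c').prodMk c) = F.comp (.prodMk (.const _ (φ (-w))) c) := by
    ext1 y
    rcases hcc' y with hy | hy
    · simpa [hy] using hF _ _
    · simp [hy]
  have hleft : (F.comp (φ.prodMk (.id _))).Homotopic (F.comp ((φ.comp c').prodMk c)) :=
    .comp (.refl F) (.prodMk (.comp (.refl φ) hc') hc)
  exact hleft.trans (heq ▸ .comp (.refl F) (.prodMk (.refl _) hc.symm))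

variable {A B : Type*} [NormedAddCommGroup A] [InnerProductSpace ℝ A] [FiniteDimensional ℝ A]
  [NormedAddCommGroup B] [InnerProductSpace ℝ B] [FiniteDimensional ℝ B]

theorem exists_homotopic_const_on_slice (hB : 1 < Module.finrank ℝ B)
    (hAB : Module.finrank ℝ A < Module.finrank ℝ B)
    (g : C(UnitSphere A × UnitSphere B, UnitSphere B)) (w q : UnitSphere B) :
    ∃ g' : C(UnitSphere A × UnitSphere B, UnitSphere B), g.Homotopic g' ∧ ∀ x, g' (x, w) = q := by
  obtain ⟨q', hq'⟩ := nullhomotopic_of_finrank_lt hAB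
    (g.comp (.prodMk (.id _) (.const _ w)))
  exact exists_homotopic_extending_slice g w
    (hq'.trans (homotopic_const_of_one_lt_finrank hB q' q))

theorem comp_prodMk_id_homotopic (hA : 1 < Module.finrank ℝ A)
    (hAB : Module.finrank ℝ A < Module.finrank ℝ B)
    (g : C(UnitSphere A × UnitSphere B, UnitSphere B)) (φ : C(UnitSphere B, UnitSphere A))
    (x₀ : UnitSphere A) :
    (g.comp (φ.prodMk (.id _))).Homotopic (g.comp (.prodMk (.const _ x₀) (.id _))) := by
  have : Nontrivial B := Module.nontrivial_of_finrank_pos (Nat.zero_lt_of_lt hAB)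
  obtain ⟨w⟩ : Nonempty (UnitSphere B) := (NormedSpace.sphere_nonempty.2 zero_le_one).to_subtype
  obtain ⟨g', hg, hg'⟩ := exists_homotopic_const_on_slice (hA.trans hAB) hAB g w w
  have hφ := comp_prodMk_id_homotopic_of_slice_const
    (fun x x' => (hg' x).trans (hg' x').symm) φ
  exact (hg.comp (.refl _)).trans <| hφ.trans <|
    .comp hg.symm (.prodMk (homotopic_const_of_one_lt_finrank hA _ _) (.refl _))

theorem surjective_prodMk_of_slices_homotopic_id (hA : 1 < Module.finrank ℝ A)
    (hAB : Module.finrank ℝ A < Module.finrank ℝ B)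
    {k₁ : C(UnitSphere A × UnitSphere B, UnitSphere A)}
    {k₂ : C(UnitSphere A × UnitSphere B, UnitSphere B)} {x₀ : UnitSphere A} {y₀ : UnitSphere B}
    (hk₁ : (k₁.comp (.prodMk (.id _) (.const _ y₀))).Homotopic (.id _))
    (hk₂ : (k₂.comp (.prodMk (.const _ x₀) (.id _))).Homotopic (.id _)) :
    Function.Surjective (k₁.prodMk k₂) := by
  rintro ⟨p₁, p₂⟩
  have hB := hA.trans hAB
  obtain ⟨k₂', hk₂', hk₂'_slice⟩ := exists_homotopic_const_on_slice hB hAB k₂ p₂ (-p₂)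
  obtain ⟨c, c', hc, hc', hcc'⟩ := exists_homotopic_id_eq_or_eq_neg p₂
  have hslice₁ : (ContinuousMap.id _).Homotopic (k₁.comp (.prodMk (.id _) (.const _ (-p₂)))) :=
    hk₁.symm.trans (.comp (.refl _) (.prodMk (.refl _) (homotopic_const_of_one_lt_finrank hB _ _)))
  have hslice₂ : (ContinuousMap.id _).Homotopic (k₂'.comp (.prodMk (.const _ p₁) (.id _))) :=
    hk₂.symm.trans (.comp hk₂' (.prodMk (homotopic_const_of_one_lt_finrank hA _ _) (.refl _)))
  have h₁ : EssentialPair p₁ p₂ .fst k₂' :=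
    ((essentialPair_fst_snd p₁ p₂).of_homotopic (.refl _) (.comp hslice₂ (.refl .snd))).congr_snd
      fun z (hz : z.1 = p₁) => congrArg (fun x => k₂' (x, z.2)) hz.symm
  have h₂ : EssentialPair p₁ p₂ ((k₁.comp (.prodMk (.id _) (.const _ (-p₂)))).comp .fst)
      (k₂'.comp (.prodMap (.id _) c)) :=
    h₁.of_homotopic (.comp hslice₁ (.refl .fst)) (.comp (.refl k₂') (.prodMap (.refl (.id _)) hc))
  have h₃ : EssentialPair p₁ p₂ (k₁.comp (.prodMap (.id _) c'))
      (k₂'.comp (.prodMap (.id _) c)) := by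
    refine h₂.congr_fst fun z (hz : k₂' (z.1, c z.2) = p₂) => ?_
    have hcz : c z.2 ≠ p₂ := fun h =>
      ne_neg_of_mem_unit_sphere ℝ p₂ (hz.symm.trans (h ▸ hk₂'_slice z.1))
    exact congrArg (fun y => k₁ (z.1, y)) ((hcc' z.2).resolve_left hcz).symm
  have h₄ : EssentialPair p₁ p₂ k₁ k₂ :=
    h₃.of_homotopic (.comp (.refl k₁) (.prodMap (.refl (.id _)) hc'.symm))
      (.comp hk₂'.symm (.prodMap (.refl (.id _)) hc.symm))
  obtain ⟨z, hz₁, hz₂⟩ := h₄.exists_eq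
  exact ⟨z, Prod.ext hz₁ hz₂⟩

theorem surjective_prodMk_of_homotopy_sections (hA : 1 < Module.finrank ℝ A)
    (hAB : Module.finrank ℝ A < Module.finrank ℝ B)
    {f₁ : C(UnitSphere A × UnitSphere B, UnitSphere A)}
    {f₂ : C(UnitSphere A × UnitSphere B, UnitSphere B)}
    {u : C(UnitSphere A, UnitSphere A × UnitSphere B)}
    {v : C(UnitSphere B, UnitSphere A × UnitSphere B)}
    (hu : (f₁.comp u).Homotopic (.id _)) (hv : (f₂.comp v).Homotopic (.id _)) :
    Function.Surjective (f₁.prodMk f₂) := by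
  have : Nontrivial A := Module.nontrivial_of_finrank_pos (Nat.zero_lt_of_lt hA)
  obtain ⟨x₀⟩ : Nonempty (UnitSphere A) := (NormedSpace.sphere_nonempty.2 zero_le_one).to_subtype
  let y₀ := (u x₀).2
  let u₁ := ContinuousMap.fst.comp u
  let v₂ := ContinuousMap.snd.comp v
  obtain ⟨q, hq⟩ := nullhomotopic_of_finrank_lt hAB (ContinuousMap.snd.comp u)
  have hk₁ : (f₁.comp (u₁.prodMk (.const _ (v₂ y₀)))).Homotopic (.id _) :=
    (ContinuousMap.Homotopic.comp (.refl f₁) (.prodMk (.refl u₁) <|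
      (homotopic_const_of_one_lt_finrank (hA.trans hAB) _ q).trans hq.symm)).trans hu
  have hk₂ : (f₂.comp (.prodMk (.const _ (u₁ x₀)) v₂)).Homotopic (.id _) :=
    (comp_prodMk_id_homotopic hA hAB (f₂.comp (.prodMap (.id _) v₂)) (ContinuousMap.fst.comp v)
      (u₁ x₀)).symm.trans hv
  exact .of_comp (g := u₁.prodMap v₂)
    (surjective_prodMk_of_slices_homotopic_id hA hAB (k₁ := f₁.comp (u₁.prodMap v₂))
      (k₂ := f₂.comp (u₁.prodMap v₂)) hk₁ hk₂)

end SphereProduct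

namespace Wedge

variable {X Y : Type} [TopologicalSpace X] [TopologicalSpace Y] {x₀ : X} {y₀ : Y}

/-- The inclusion of the first summand. -/
def inl : C(X, Wedge X Y x₀ y₀) :=
  ⟨fun x => Quot.mk _ (.inl x), continuous_quot_mk.comp continuous_inl⟩

/-- The inclusion of the second summand. -/
def inr : C(Y, Wedge X Y x₀ y₀) :=
  ⟨fun y => Quot.mk _ (.inr y), continuous_quot_mk.comp continuous_inr⟩

/-- The map collapsing the second summand to the basepoint. -/
def fst : C(Wedge X Y x₀ y₀, X) where
  toFun := Quot.lift (Sum.elim id fun _ => x₀) (by rintro _ _ ⟨rfl, rfl⟩; rfl)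
  continuous_toFun := continuous_quot_lift _ (continuous_id.sumElim continuous_const)

/-- The map collapsing the first summand to the basepoint. -/
def snd : C(Wedge X Y x₀ y₀, Y) where
  toFun := Quot.lift (Sum.elim (fun _ => y₀) id) (by rintro _ _ ⟨rfl, rfl⟩; rfl)
  continuous_toFun := continuous_quot_lift _ (continuous_const.sumElim continuous_id)

theorem fst_eq_or_snd_eq (w : Wedge X Y x₀ y₀) : fst w = x₀ ∨ snd w = y₀ := by
  rcases w with ⟨_ | _⟩
  exacts [.inr rfl, .inl rfl]

end Wedge

theorem wedge_not_dominated_by_prod_general {A B : Type} [NormedAddCommGroup A]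
    [InnerProductSpace ℝ A] [FiniteDimensional ℝ A] [NormedAddCommGroup B] [InnerProductSpace ℝ B]
    [FiniteDimensional ℝ B] (hA : 1 < Module.finrank ℝ A)
    (hAB : Module.finrank ℝ A < Module.finrank ℝ B) (x₀ : UnitSphere A) (y₀ : UnitSphere B) :
    ¬ HDominates (UnitSphere A × UnitSphere B) (Wedge (UnitSphere A) (UnitSphere B) x₀ y₀) := by
  rintro ⟨d, u, hdu⟩
  have hu : ((Wedge.fst.comp d).comp (u.comp Wedge.inl)).Homotopic (.id _) :=
    .comp (.refl Wedge.fst) (.comp hdu (.refl Wedge.inl))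
  have hv : ((Wedge.snd.comp d).comp (u.comp Wedge.inr)).Homotopic (.id _) :=
    .comp (.refl Wedge.snd) (.comp hdu (.refl Wedge.inr))
  obtain ⟨z, hz⟩ := surjective_prodMk_of_homotopy_sections hA hAB hu hv (-x₀, -y₀)
  rcases Wedge.fst_eq_or_snd_eq (d z) with h | h
  · exact ne_neg_of_mem_unit_sphere ℝ x₀ (h.symm.trans (congrArg Prod.fst hz))
  · exact ne_neg_of_mem_unit_sphere ℝ y₀ (h.symm.trans (congrArg Prod.snd hz))

/-- For `2 < n + 1 < m`, the wedge `Sⁿ ∨ Sᵐ` is not homotopy dominated by `Sⁿ × Sᵐ`. -/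
theorem wedge_not_dominated_by_prod (n m : ℕ) (hn : 2 < n + 1) (hm : n + 1 < m) :
    ¬ HDominates (USphere n × USphere m)
        (Wedge (USphere n) (USphere m) (spherePt n) (spherePt m)) :=
  wedge_not_dominated_by_prod_general (by rw [finrank_euclideanSpace_fin]; omega)
    (by simp only [finrank_euclideanSpace_fin]; omega) _ _
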